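/- Let I be a stable roommate instance on a finite set P of 2n people (n ≥ 1), and suppose a, b ∈ P are each other's most-preferred person. Then every stable matching of I contains the pair {a,b}, and the map M ↦ M ∖ {{a,b}} is a bijection between the stable matchings of I and the stable matchings of the restricted instance on P ∖ {a,b}. -/

import Mathlib

/-!
If a matching misses `{a, b}`, then `a` and `b` both have partners they like less than each other,
so `{a, b}` blocks it; hence every stable matching contains `{a, b}`. Deleting this pair leaves a
matching of the other people, and inserting it into a matching of the others is the inverse
operation. Stability is preserved in both directions: the partner of a person outside `{a, b}` is
unaffected, so such people form the same blocking pairs before and after, and neither `a` nor `b`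
can take part in a blocking pair once they are matched to their favourites.
-/

/-- Person `i` prefers person `j` to person `k` when `j` has a smaller rank
in `i`'s ranking `rk i`.  A ranking function `rk` that is injective on the
other people encodes a strict total preference order. -/
def Prefers {α : Type*} (rk : α → α → ℕ) (i j k : α) : Prop :=
  rk i j < rk i k

/-- `M` is a matching of the people in `S`: a partition of `S` into
unordered pairs. -/
def IsMatching {α : Type*} [DecidableEq α] (S : Finset α) (M : Finset (Finset α)) : Prop :=
  (∀ p ∈ M, ∃ i j, i ≠ j ∧ i ∈ S ∧ j ∈ S ∧ p = {i, j}) ∧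
  (∀ i ∈ S, ∃! p, p ∈ M ∧ i ∈ p)

/-- The pair `{i, j}` is a blocking pair for the matching `M`:
it is not in `M`, and each of `i`, `j` prefers the other to their
partner in `M`. -/
def IsBlocking {α : Type*} [DecidableEq α] (rk : α → α → ℕ)
    (M : Finset (Finset α)) (i j : α) : Prop :=
  i ≠ j ∧ ({i, j} : Finset α) ∉ M ∧
  (∀ k, ({i, k} : Finset α) ∈ M → k ≠ i → Prefers rk i j k) ∧
  (∀ k, ({j, k} : Finset α) ∈ M → k ≠ j → Prefers rk j i k)

/-- `M` is a stable matching of the roommate instance on the set of people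
`S` with preferences given by the rankings `rk`. -/
def IsStable {α : Type*} [DecidableEq α] (rk : α → α → ℕ)
    (S : Finset α) (M : Finset (Finset α)) : Prop :=
  IsMatching S M ∧ ∀ i ∈ S, ∀ j ∈ S, ¬ IsBlocking rk M i j

/-- A matched pair consists of people of `S`. -/
lemma IsMatching.mem_of_mem {α : Type*} [DecidableEq α] {S : Finset α} {M : Finset (Finset α)}
    (h : IsMatching S M) {p : Finset α} (hp : p ∈ M) {x : α} (hx : x ∈ p) : x ∈ S := by
  obtain ⟨i, j, -, hi, hj, rfl⟩ := h.1 p hp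
  simp only [Finset.mem_insert, Finset.mem_singleton] at hx
  rcases hx with rfl | rfl <;> assumption

lemma IsMatching.eq_of_mem {α : Type*} [DecidableEq α] {S : Finset α} {M : Finset (Finset α)}
    (h : IsMatching S M) {p q : Finset α} (hp : p ∈ M) (hq : q ∈ M) {x : α}
    (hxp : x ∈ p) (hxq : x ∈ q) : p = q :=
  (h.2 x (h.mem_of_mem hp hxp)).unique ⟨hp, hxp⟩ ⟨hq, hxq⟩

lemma IsMatching.erase_pair {α : Type*} [DecidableEq α] {P : Finset α} {M : Finset (Finset α)}
    {a b : α} (h : IsMatching P M) (hM : ({a, b} : Finset α) ∈ M) :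
    IsMatching (P \ {a, b}) (M.erase {a, b}) := by
  constructor
  · intro p hp
    obtain ⟨hne, hp⟩ := Finset.mem_erase.1 hp
    obtain ⟨i, j, hij, hi, hj, rfl⟩ := h.1 p hp
    refine ⟨i, j, hij, Finset.mem_sdiff.2 ⟨hi, fun hi' => hne ?_⟩,
      Finset.mem_sdiff.2 ⟨hj, fun hj' => hne ?_⟩, rfl⟩
    · exact h.eq_of_mem hp hM (by simp) hi'
    · exact h.eq_of_mem hp hM (by simp) hj'
  · intro i hi
    obtain ⟨hi, hi'⟩ := Finset.mem_sdiff.1 hi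
    obtain ⟨p, ⟨hp, hip⟩, huniq⟩ := h.2 i hi
    refine ⟨p, ⟨Finset.mem_erase.2 ⟨fun e => hi' (e ▸ hip), hp⟩, hip⟩, fun q hq => ?_⟩
    exact huniq q ⟨Finset.mem_of_mem_erase hq.1, hq.2⟩

lemma IsMatching.insert_pair {α : Type*} [DecidableEq α] {P : Finset α} {N : Finset (Finset α)}
    {a b : α} (ha : a ∈ P) (hb : b ∈ P) (hab : a ≠ b) (h : IsMatching (P \ {a, b}) N) :
    IsMatching P (insert {a, b} N) := by
  constructor
  · intro p hp
    rcases Finset.mem_insert.1 hp with rfl | hp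
    · exact ⟨a, b, hab, ha, hb, rfl⟩
    · obtain ⟨i, j, hij, hi, hj, rfl⟩ := h.1 p hp
      exact ⟨i, j, hij, (Finset.mem_sdiff.1 hi).1, (Finset.mem_sdiff.1 hj).1, rfl⟩
  · intro i hi
    by_cases hi' : i ∈ ({a, b} : Finset α)
    · refine ⟨{a, b}, ⟨Finset.mem_insert_self _ _, hi'⟩, fun q hq => ?_⟩
      rcases Finset.mem_insert.1 hq.1 with rfl | hqN
      · rfl
      · exact absurd hi' (Finset.mem_sdiff.1 (h.mem_of_mem hqN hq.2)).2
    · obtain ⟨p, ⟨hp, hip⟩, huniq⟩ := h.2 i (Finset.mem_sdiff.2 ⟨hi, hi'⟩)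
      refine ⟨p, ⟨Finset.mem_insert_of_mem hp, hip⟩, fun q hq => ?_⟩
      rcases Finset.mem_insert.1 hq.1 with rfl | hqN
      · exact absurd hq.2 hi'
      · exact huniq q ⟨hqN, hq.2⟩

lemma IsBlocking.symm {α : Type*} [DecidableEq α] {rk : α → α → ℕ} {M : Finset (Finset α)}
    {i j : α} (h : IsBlocking rk M i j) : IsBlocking rk M j i :=
  ⟨h.1.symm, by rw [Finset.pair_comm]; exact h.2.1, h.2.2.2, h.2.2.1⟩

/-- Whether two people outside `q` block depends only on the pairs other than `q`. -/
lemma IsBlocking.congr_of_notMem {α : Type*} [DecidableEq α] {rk : α → α → ℕ}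
    {M N : Finset (Finset α)} {q : Finset α} (hMN : ∀ p, p ≠ q → (p ∈ M ↔ p ∈ N)) {i j : α}
    (hi : i ∉ q) (hj : j ∉ q) (h : IsBlocking rk M i j) : IsBlocking rk N i j := by
  have key : ∀ {x : α}, x ∉ q → ∀ y, (({x, y} : Finset α) ∈ M ↔ ({x, y} : Finset α) ∈ N) :=
    fun hx y => hMN _ fun e => hx (e ▸ Finset.mem_insert_self _ _)
  exact ⟨h.1, fun hm => h.2.1 ((key hi j).2 hm), fun k hk => h.2.2.1 k ((key hi k).2 hk),
    fun k hk => h.2.2.2 k ((key hj k).2 hk)⟩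

/-- A person matched to their favourite takes part in no blocking pair. -/
lemma not_isBlocking_of_favorite {α : Type*} [DecidableEq α] {rk : α → α → ℕ}
    {P : Finset α} {M : Finset (Finset α)} {a b : α} (hab : a ≠ b)
    (hfav : ∀ c ∈ P, c ≠ a → c ≠ b → Prefers rk a b c) (hM : ({a, b} : Finset α) ∈ M)
    {j : α} (hj : j ∈ P) : ¬ IsBlocking rk M a j := by
  intro h
  have hjb : j ≠ b := by
    rintro rfl
    exact h.2.1 hM
  exact lt_asymm (h.2.2.1 b hM hab.symm) (hfav j hj h.1.symm hjb)

/-- If `a` and `b` are each other's most-preferred person in a stable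
roommate instance on `2*n` people, then every stable matching contains the
pair `{a, b}`, and `M ↦ M.erase {a, b}` is a bijection between the stable
matchings of the instance and those of the restricted instance on
`P \ {a, b}`. -/
theorem mutual_favorites_pair_off {α : Type*} [DecidableEq α] (n : ℕ) (hn : 1 ≤ n)
    (P : Finset α) (hP : P.card = 2 * n)
    (rk : α → α → ℕ)
    (hrk : ∀ p ∈ P, ∀ x ∈ P, ∀ y ∈ P, x ≠ p → y ≠ p → x ≠ y → rk p x ≠ rk p y)
    (a b : α) (ha : a ∈ P) (hb : b ∈ P) (hab : a ≠ b)
    (hfava : ∀ c ∈ P, c ≠ a → c ≠ b → Prefers rk a b c)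
    (hfavb : ∀ c ∈ P, c ≠ a → c ≠ b → Prefers rk b a c) :
    (∀ M : Finset (Finset α), IsStable rk P M → ({a, b} : Finset α) ∈ M) ∧
    Set.BijOn (fun M : Finset (Finset α) => M.erase ({a, b} : Finset α))
      {M | IsStable rk P M}
      {M | IsStable rk (P \ ({a, b} : Finset α)) M} := by
  have hmem : ∀ M : Finset (Finset α), IsStable rk P M → ({a, b} : Finset α) ∈ M := by
    intro M hM
    by_contra hnot
    refine hM.2 a ha b hb ⟨hab, hnot, fun k hk hka => ?_, fun k hk hkb => ?_⟩
    · refine hfava k (hM.1.mem_of_mem hk (by simp)) hka ?_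
      rintro rfl
      exact hnot hk
    · refine hfavb k (hM.1.mem_of_mem hk (by simp)) ?_ hkb
      rintro rfl
      exact hnot (by rwa [Finset.pair_comm])
  refine ⟨hmem, fun M hM => ?_, fun M hM M' hM' h => ?_, fun N hN => ?_⟩
  · refine ⟨hM.1.erase_pair (hmem M hM), fun i hi j hj h => ?_⟩
    obtain ⟨hi, hi'⟩ := Finset.mem_sdiff.1 hi
    obtain ⟨hj, hj'⟩ := Finset.mem_sdiff.1 hj
    exact hM.2 i hi j hj
      (h.congr_of_notMem (fun p hp => by simp [hp]) hi' hj')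
  · rw [← Finset.insert_erase (hmem M hM), ← Finset.insert_erase (hmem M' hM')]
    exact congrArg (insert ({a, b} : Finset α)) h
  · have hnot : ({a, b} : Finset α) ∉ N := fun h =>
      (Finset.mem_sdiff.1 (hN.1.mem_of_mem h (Finset.mem_insert_self a _))).2 (by simp)
    refine ⟨insert {a, b} N, ⟨hN.1.insert_pair ha hb hab, fun i hi j hj h => ?_⟩,
      Finset.erase_insert hnot⟩
    have hfree : ∀ x ∈ ({a, b} : Finset α), ∀ y ∈ P,
        ¬ IsBlocking rk (insert {a, b} N) x y := by
      intro x hx y hy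
      rcases Finset.mem_insert.1 hx with rfl | hx
      · exact not_isBlocking_of_favorite hab hfava (Finset.mem_insert_self _ _) hy
      · rw [Finset.mem_singleton.1 hx]
        exact not_isBlocking_of_favorite hab.symm (fun c hc h1 h2 => hfavb c hc h2 h1)
          (by rw [Finset.pair_comm b a]; exact Finset.mem_insert_self _ _) hy
    have hi' : i ∉ ({a, b} : Finset α) := fun hx => hfree i hx j hj h
    have hj' : j ∉ ({a, b} : Finset α) := fun hx => hfree j hx i hi h.symm
    exact hN.2 i (Finset.mem_sdiff.2 ⟨hi, hi'⟩) j (Finset.mem_sdiff.2 ⟨hj, hj'⟩)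
      (h.congr_of_notMem (fun p hp => by simp [hp]) hi' hj')
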